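/- arXiv:1006.1874 — 7 statements merged into one kernel-verified Lean document; each statement's English description precedes it below -/
import Mathlib

section
/- Let K = [[A, B],[Bᵀ, 0]] be an F-matrix with A ∈ ℝ^{n×n} and B ∈ ℝ^{n×m}, and let i ∈ {1,…,n}, j ∈ {1,…,m} be indices with B_{ij} ≠ 0. Then the 2×2 pivot P = [[A_{ii}, B_{ij}],[B_{ij}, 0]] is invertible, and the Schur complement K' = K_{RR} − K_{RP} P^{−1} K_{PR} of K with respect to the rows and columns indexed by velocity i and pressure j (where R is the remaining index set, ordered as the velocities other than i followed by the pressures other than j) is again an F-matrix: K' = [[A', B'],[B'ᵀ, 0]] with A' ∈ ℝ^{(n−1)×(n−1)} positive definite, B' ∈ ℝ^{(n−1)×(m−1)} a gradient-matrix, and in particular the pressure–pressure block of K' is the zero matrix. -/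
open Matrix

/-- A real matrix is a gradient-matrix if every row has at most two nonzero
entries and every row sums to zero. -/
def IsGradientMatrix {α β : Type*} [Fintype α] [Fintype β] [DecidableEq β]
    (B : Matrix α β ℝ) : Prop :=
  ∀ i : α, (Finset.univ.filter fun j => B i j ≠ 0).card ≤ 2 ∧ ∑ j, B i j = 0

/-- Positive definiteness (symmetry not assumed): `xᵀ A x > 0` for all `x ≠ 0`. -/
def IsPosDefQuad {α : Type*} [Fintype α] (A : Matrix α α ℝ) : Prop :=
  ∀ x : α → ℝ, x ≠ 0 → 0 < x ⬝ᵥ A.mulVec x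

/-- The saddle point matrix `K = [[A, B], [Bᵀ, 0]]`. -/
def saddleMatrix {n m : ℕ} (A : Matrix (Fin n) (Fin n) ℝ) (B : Matrix (Fin n) (Fin m) ℝ) :
    Matrix (Fin n ⊕ Fin m) (Fin n ⊕ Fin m) ℝ :=
  Matrix.fromBlocks A B Bᵀ 0

/-- The embedding of the 2×2 pivot index pair (velocity `i`, pressure `j`). -/
def pivotEmb {n m : ℕ} (i : Fin n) (j : Fin m) : Fin 2 → (Fin n ⊕ Fin m) :=
  ![Sum.inl i, Sum.inr j]

/-- The embedding of the remaining indices: velocities other than `i` followed by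
pressures other than `j`. -/
def restEmb {n m : ℕ} (i : Fin n) (j : Fin m) :
    ({i' : Fin n // i' ≠ i} ⊕ {j' : Fin m // j' ≠ j}) → (Fin n ⊕ Fin m) :=
  Sum.map Subtype.val Subtype.val

/-- The Schur complement `K_RR − K_RP P⁻¹ K_PR` of the saddle point matrix with
respect to the 2×2 pivot on (velocity `i`, pressure `j`). -/
noncomputable def schurPivot2 {n m : ℕ} (A : Matrix (Fin n) (Fin n) ℝ)
    (B : Matrix (Fin n) (Fin m) ℝ) (i : Fin n) (j : Fin m) :
    Matrix ({i' : Fin n // i' ≠ i} ⊕ {j' : Fin m // j' ≠ j})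
           ({i' : Fin n // i' ≠ i} ⊕ {j' : Fin m // j' ≠ j}) ℝ :=
  (saddleMatrix A B).submatrix (restEmb i j) (restEmb i j) -
    (saddleMatrix A B).submatrix (restEmb i j) (pivotEmb i j) *
      ((saddleMatrix A B).submatrix (pivotEmb i j) (pivotEmb i j))⁻¹ *
        (saddleMatrix A B).submatrix (pivotEmb i j) (restEmb i j)

theorem schur_aux_inv (a b : ℝ) (hb : b ≠ 0) :
    IsUnit (!![a, b; b, 0] : Matrix (Fin 2) (Fin 2) ℝ) ∧
    (!![a, b; b, 0] : Matrix (Fin 2) (Fin 2) ℝ)⁻¹ = !![0, 1 / b; 1 / b, -a / b ^ 2] := by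
  have h : (!![a, b; b, 0] : Matrix (Fin 2) (Fin 2) ℝ) * !![0, 1 / b; 1 / b, -a / b ^ 2] = 1 := by
    ext p q
    fin_cases p <;> fin_cases q <;> simp [Matrix.mul_apply, Fin.sum_univ_two, hb]
    field_simp
    ring
  refine ⟨?_, Matrix.inv_eq_right_inv h⟩
  rw [Matrix.isUnit_iff_isUnit_det]
  exact Matrix.isUnit_det_of_right_inverse h

theorem schur_aux_pivot {n m : ℕ} (A : Matrix (Fin n) (Fin n) ℝ) (B : Matrix (Fin n) (Fin m) ℝ)
    (i : Fin n) (j : Fin m) :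
    (saddleMatrix A B).submatrix (pivotEmb i j) (pivotEmb i j) = !![A i i, B i j; B i j, 0] := by
  ext p q
  fin_cases p <;> fin_cases q <;> simp [saddleMatrix, pivotEmb]

theorem schur_aux_eq {n m : ℕ} (A : Matrix (Fin n) (Fin n) ℝ) (B : Matrix (Fin n) (Fin m) ℝ)
    (i : Fin n) (j : Fin m) (hij : B i j ≠ 0) :
    schurPivot2 A B i j = Matrix.fromBlocks
      (Matrix.of fun k l => A k l - A k i * (B l j / B i j) - (B k j / B i j) * A i l
        + A i i * (B k j / B i j) * (B l j / B i j) :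
        Matrix {i' : Fin n // i' ≠ i} {i' : Fin n // i' ≠ i} ℝ)
      (Matrix.of fun k q => B k q - B k j / B i j * B i q :
        Matrix {i' : Fin n // i' ≠ i} {j' : Fin m // j' ≠ j} ℝ)
      (Matrix.of fun k q => B k q - B k j / B i j * B i q :
        Matrix {i' : Fin n // i' ≠ i} {j' : Fin m // j' ≠ j} ℝ)ᵀ 0 := by
  unfold schurPivot2
  rw [schur_aux_pivot, (schur_aux_inv _ _ hij).2]
  ext p q
  rw [Matrix.sub_apply, Matrix.mul_apply, Fin.sum_univ_two, Matrix.mul_apply, Matrix.mul_apply,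
    Fin.sum_univ_two, Fin.sum_univ_two]
  rcases p with p | p <;> rcases q with q | q <;>
    simp [saddleMatrix, pivotEmb, restEmb, -mul_eq_mul_right_iff] <;>
    field_simp <;> ring

theorem schur_aux_pos {n : ℕ} (A : Matrix (Fin n) (Fin n) ℝ) (hA : IsPosDefQuad A)
    (i : Fin n) (c : Fin n → ℝ) :
    IsPosDefQuad (Matrix.of fun k l => A k l - A k i * c l - c k * A i l + A i i * c k * c l :
      Matrix {i' : Fin n // i' ≠ i} {i' : Fin n // i' ≠ i} ℝ) := by
  intro x hx
  set s : ℝ := ∑ k : {i' : Fin n // i' ≠ i}, c k * x k with hs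
  let y : Fin n → ℝ := fun k => if h : k = i then -s else x ⟨k, h⟩
  have hyi : y i = -s := by simp [y]
  have hyk : ∀ k : {i' : Fin n // i' ≠ i}, y k = x k := fun k => by simp [y, k.2]
  have hy : y ≠ 0 := by
    intro h
    apply hx
    funext k
    rw [← hyk, h]
    rfl
  have := hA y hy
  convert this using 1
  simp only [dotProduct, Matrix.mulVec, Matrix.of_apply]
  rw [Fintype.sum_eq_add_sum_subtype_ne _ i]
  simp only [Fintype.sum_eq_add_sum_subtype_ne _ i, hyi, hyk]
  set t : ℝ := ∑ l : {i' : Fin n // i' ≠ i}, A i l * x l with ht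
  have h1 : ∀ k : {i' : Fin n // i' ≠ i},
      ∑ l : {i' : Fin n // i' ≠ i},
        (A k l - A k i * c l - c k * A i l + A i i * c k * c l) * x l
      = ∑ l : {i' : Fin n // i' ≠ i}, A k l * x l - A k i * s - c k * t + A i i * c k * s := by
    intro k
    rw [hs, ht, Finset.mul_sum, Finset.mul_sum, Finset.mul_sum, ← Finset.sum_sub_distrib,
      ← Finset.sum_sub_distrib, ← Finset.sum_add_distrib]
    exact Finset.sum_congr rfl fun l _ => by ring
  simp only [h1]
  have h2 : -s * (A i i * -s + t) = ∑ k : {i' : Fin n // i' ≠ i},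
      c k * x k * (A i i * s - t) := by
    rw [← Finset.sum_mul, ← hs]
    ring
  rw [h2, ← Finset.sum_add_distrib]
  exact Finset.sum_congr rfl fun l _ => by ring

theorem schur_aux_grad {n m : ℕ} (B : Matrix (Fin n) (Fin m) ℝ) (hB : IsGradientMatrix B)
    (i : Fin n) (j : Fin m) (hij : B i j ≠ 0) :
    IsGradientMatrix (Matrix.of fun k q => B k q - B k j / B i j * B i q :
        Matrix {i' : Fin n // i' ≠ i} {j' : Fin m // j' ≠ j} ℝ) := by
  intro k
  have hk := hB k
  have hi := hB i
  constructor
  · rw [← Finset.card_map (Function.Embedding.subtype _)]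
    by_cases h : B k j = 0
    · refine (Finset.card_le_card ?_).trans hk.1
      intro q hq
      simp only [Finset.mem_map, Finset.mem_filter, Finset.mem_univ, true_and] at hq ⊢
      obtain ⟨q', hq', rfl⟩ := hq
      simpa [h] using hq'
    · have e1 : ∀ r : Fin n, B r j ≠ 0 →
          (Finset.univ.filter fun q => B r q ≠ 0).card ≤ 2 →
          ((Finset.univ.filter fun q => B r q ≠ 0).erase j).card ≤ 1 := by
        intro r hr hc
        rw [Finset.card_erase_of_mem (by simpa using hr)]
        omega
      have e2 := e1 k h hk.1
      have e3 := e1 i hij hi.1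
      refine (Finset.card_le_card (t := (Finset.univ.filter fun q => B k q ≠ 0).erase j ∪
        (Finset.univ.filter fun q => B i q ≠ 0).erase j) ?_).trans
        ((Finset.card_union_le _ _).trans (by omega))
      intro q hq
      simp only [Finset.mem_map, Finset.mem_filter, Finset.mem_univ, true_and] at hq
      obtain ⟨q', hq', rfl⟩ := hq
      simp only [Finset.mem_union, Finset.mem_erase, Finset.mem_filter, Finset.mem_univ, true_and]
      by_contra hcon
      apply hq'
      have hne : (Function.Embedding.subtype _ q' : Fin m) ≠ j := q'.2
      have h1 : B k q' = 0 := by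
        by_contra h1
        exact hcon (Or.inl ⟨hne, h1⟩)
      have h2 : B i q' = 0 := by
        by_contra h2
        exact hcon (Or.inr ⟨hne, h2⟩)
      simp [h1, h2]
  · have s1 := hk.2
    have s2 := hi.2
    rw [Fintype.sum_eq_add_sum_subtype_ne _ j] at s1 s2
    simp only [Matrix.of_apply]
    rw [Finset.sum_sub_distrib, ← Finset.mul_sum, eq_neg_of_add_eq_zero_right s1,
      eq_neg_of_add_eq_zero_right s2]
    field_simp
    ring

/-- If `K` is an F-matrix and `B i j ≠ 0`, then the 2×2 pivot
`P = [[A_ii, B_ij], [B_ij, 0]]` is invertible and the Schur complement of `K`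
with respect to this pivot is again an F-matrix; in particular its
pressure–pressure block vanishes. -/
theorem schur_complement_of_Fmatrix_is_Fmatrix
    {n m : ℕ} (A : Matrix (Fin n) (Fin n) ℝ) (B : Matrix (Fin n) (Fin m) ℝ)
    (hA : IsPosDefQuad A) (hB : IsGradientMatrix B)
    (i : Fin n) (j : Fin m) (hij : B i j ≠ 0) :
    IsUnit ((saddleMatrix A B).submatrix (pivotEmb i j) (pivotEmb i j)) ∧
    (∃ (A' : Matrix {i' : Fin n // i' ≠ i} {i' : Fin n // i' ≠ i} ℝ)
       (B' : Matrix {i' : Fin n // i' ≠ i} {j' : Fin m // j' ≠ j} ℝ),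
        schurPivot2 A B i j = Matrix.fromBlocks A' B' B'ᵀ 0 ∧
        IsPosDefQuad A' ∧ IsGradientMatrix B') ∧
    (∀ (j₁ j₂ : {j' : Fin m // j' ≠ j}),
        schurPivot2 A B i j (Sum.inr j₁) (Sum.inr j₂) = 0) := by
  refine ⟨?_, ⟨_, _, schur_aux_eq A B i j hij,
    schur_aux_pos A hA i (fun k => B k j / B i j), schur_aux_grad B hB i j hij⟩, ?_⟩
  · rw [schur_aux_pivot]
    exact (schur_aux_inv _ _ hij).1
  · intro p q
    rw [schur_aux_eq A B i j hij]
    rfl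
end

section
/- Let K = [[A, B],[Bᵀ, 0]] be an F-matrix with A ∈ ℝ^{n×n}, B ∈ ℝ^{n×m}, and let i, j be indices with β := B_{ij} ≠ 0. Let b ∈ ℝ^{m−1} be row i of B with entry j removed, let b̂ ∈ ℝ^{n−1} be column j of B with entry i removed, and let B̂ ∈ ℝ^{(n−1)×(m−1)} be B with row i and column j removed. Then the velocity–pressure block of the Schur complement of K with respect to the 2×2 pivot on indices (velocity i, pressure j) equals B̂ − (1/β) b̂ bᵀ. In particular, this block depends only on B, i and j, and not on the entries of A: two F-matrices with the same B-part but different positive definite A-parts yield identical velocity–pressure blocks in their Schur complements. -/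
open Matrix

theorem schurPivot2_VP_aux
    {n m : ℕ} (A : Matrix (Fin n) (Fin n) ℝ) (B : Matrix (Fin n) (Fin m) ℝ)
    (i : Fin n) (j : Fin m) (hij : B i j ≠ 0)
    (i' : {i' : Fin n // i' ≠ i}) (j' : {j' : Fin m // j' ≠ j}) :
    schurPivot2 A B i j (Sum.inl i') (Sum.inr j') =
      B i'.1 j'.1 - (1 / B i j) * (B i'.1 j * B i j'.1) := by
  have hinv : ((saddleMatrix A B).submatrix (pivotEmb i j) (pivotEmb i j))⁻¹ =
      !![0, 1 / B i j; 1 / B i j, - A i i / (B i j * B i j)] := by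
    apply Matrix.inv_eq_right_inv
    ext a b
    rw [Matrix.mul_apply, Fin.sum_univ_two]
    simp only [Matrix.submatrix_apply]
    fin_cases a <;> fin_cases b <;>
      simp [saddleMatrix, pivotEmb, hij] <;>
      field_simp <;> ring
  unfold schurPivot2
  rw [hinv]
  simp only [Matrix.sub_apply, Matrix.mul_apply, Fin.sum_univ_two, Matrix.submatrix_apply]
  simp [saddleMatrix, pivotEmb, restEmb]
  ring

/-- The velocity–pressure block of the Schur complement with
respect to the 2×2 pivot on (velocity `i`, pressure `j`) equals
`B̂ − (1/β) b̂ bᵀ`, i.e. entrywise `B i' j' − (B i' j / B i j) * B i j'`.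
In particular it does not depend on the positive definite `A`-part: two
F-matrices with the same `B`-part have identical velocity–pressure blocks. -/
theorem schur_VP_block_independent_of_A
    {n m : ℕ} (A : Matrix (Fin n) (Fin n) ℝ) (B : Matrix (Fin n) (Fin m) ℝ)
    (hA : IsPosDefQuad A) (hB : IsGradientMatrix B)
    (i : Fin n) (j : Fin m) (hij : B i j ≠ 0) :
    (∀ (i' : {i' : Fin n // i' ≠ i}) (j' : {j' : Fin m // j' ≠ j}),
        schurPivot2 A B i j (Sum.inl i') (Sum.inr j') =
          B i'.1 j'.1 - (1 / B i j) * (B i'.1 j * B i j'.1)) ∧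
    (∀ (A₁ A₂ : Matrix (Fin n) (Fin n) ℝ), IsPosDefQuad A₁ → IsPosDefQuad A₂ →
      ∀ (i' : {i' : Fin n // i' ≠ i}) (j' : {j' : Fin m // j' ≠ j}),
        schurPivot2 A₁ B i j (Sum.inl i') (Sum.inr j') =
          schurPivot2 A₂ B i j (Sum.inl i') (Sum.inr j')) := by
  refine ⟨schurPivot2_VP_aux A B i j hij, fun A₁ A₂ _ _ i' j' => ?_⟩
  rw [schurPivot2_VP_aux A₁ B i j hij, schurPivot2_VP_aux A₂ B i j hij]
end

section
/- Let K = [[A, B],[Bᵀ, 0]] be an F-matrix with A ∈ ℝ^{n×n}, B ∈ ℝ^{n×m}, such that every nonzero entry of B has absolute value 1, and let i, j be indices with B_{ij} ≠ 0. Then every nonzero entry of the velocity–pressure block of the Schur complement of K with respect to the 2×2 pivot on indices (velocity i, pressure j) also has absolute value 1. -/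
open Matrix

/-- Two distinct nonzero entries in a row of a gradient-matrix are opposite. -/
theorem gradient_pair {n m : ℕ} (B : Matrix (Fin n) (Fin m) ℝ) (hB : IsGradientMatrix B)
    (k : Fin n) (j j' : Fin m) (hne : j' ≠ j) (h : B k j ≠ 0) (h' : B k j' ≠ 0) :
    B k j' + B k j = 0 := by
  obtain ⟨hc, hs⟩ := hB k
  have hsub : ({j', j} : Finset (Fin m)) ⊆ Finset.univ.filter fun l => B k l ≠ 0 := by
    intro l hl
    simp only [Finset.mem_insert, Finset.mem_singleton] at hl
    rcases hl with rfl | rfl <;> simp [h, h']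
  have heq := Finset.eq_of_subset_of_card_le hsub (by rw [Finset.card_pair hne]; exact hc)
  rw [← Finset.sum_filter_ne_zero, ← heq, Finset.sum_pair hne] at hs
  exact hs

/-- The velocity-pressure block of the Schur complement, entrywise. -/
theorem schur_entry {n m : ℕ} (A : Matrix (Fin n) (Fin n) ℝ) (B : Matrix (Fin n) (Fin m) ℝ)
    (i : Fin n) (j : Fin m) (hij : B i j ≠ 0)
    (i' : {i' : Fin n // i' ≠ i}) (j' : {j' : Fin m // j' ≠ j}) :
    schurPivot2 A B i j (Sum.inl i') (Sum.inr j') =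
      B i' j' - B i' j * B i j' / B i j := by
  have hinv : ((saddleMatrix A B).submatrix (pivotEmb i j) (pivotEmb i j))⁻¹ =
      !![0, 1 / B i j; 1 / B i j, - A i i / (B i j * B i j)] := by
    apply Matrix.inv_eq_right_inv
    ext a b
    fin_cases a <;> fin_cases b <;>
      simp only [Matrix.mul_apply, Fin.sum_univ_two, Matrix.submatrix_apply] <;>
      simp [saddleMatrix, pivotEmb, hij] <;> field_simp <;> ring
  unfold schurPivot2
  rw [hinv]
  simp only [Matrix.sub_apply, Matrix.mul_apply, Fin.sum_univ_two, Matrix.submatrix_apply]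
  simp [saddleMatrix, pivotEmb, restEmb]
  field_simp

/-- If all nonzero entries of `B` have absolute value 1, then all
nonzero entries of the velocity–pressure block of the Schur complement with respect
to the 2×2 pivot on (velocity `i`, pressure `j`) also have absolute value 1. -/
theorem schur_VP_block_entries_unit_magnitude
    {n m : ℕ} (A : Matrix (Fin n) (Fin n) ℝ) (B : Matrix (Fin n) (Fin m) ℝ)
    (hA : IsPosDefQuad A) (hB : IsGradientMatrix B)
    (hB1 : ∀ (i : Fin n) (j : Fin m), B i j ≠ 0 → |B i j| = 1)
    (i : Fin n) (j : Fin m) (hij : B i j ≠ 0) :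
    ∀ (i' : {i' : Fin n // i' ≠ i}) (j' : {j' : Fin m // j' ≠ j}),
      schurPivot2 A B i j (Sum.inl i') (Sum.inr j') ≠ 0 →
        |schurPivot2 A B i j (Sum.inl i') (Sum.inr j')| = 1 := by
  intro i' j'
  rw [schur_entry A B i j hij]
  by_cases h1 : B i j' = 0
  · simpa [h1] using hB1 i' j'
  · have e1 : B i j' = - B i j := by
      have := gradient_pair B hB i j j' j'.2 hij h1
      linarith
    have e2 : B i' j' - B i' j * B i j' / B i j = B i' j' + B i' j := by
      rw [e1]; field_simp; ring
    rw [e2]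
    by_cases h2 : B i' j = 0
    · simpa [h2] using hB1 i' j'
    · by_cases h3 : B i' j' = 0
      · simpa [h3] using hB1 i' j
      · intro h
        exact absurd (gradient_pair B hB i' j j' j'.2 h2 h3) h
end

section
/- Let K = [[A, B],[Bᵀ, 0]] be an F-matrix with A ∈ ℝ^{n×n}, B ∈ ℝ^{n×m}, and let i, j be indices with B_{ij} ≠ 0. Then A_{ii} > 0, and the Schur complement of K with respect to the 1×1 pivot A_{ii} (eliminating velocity i alone) has entry −B_{ij}²/A_{ii} ≠ 0 in the diagonal position corresponding to pressure j. Consequently the pressure–pressure block of this Schur complement is not the zero matrix, so the Schur complement is not a saddle point matrix of the form [[A', B'],[B'ᵀ, 0]] and in particular is not an F-matrix. -/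
open Matrix

/-- The embedding of the remaining indices after eliminating velocity `i` alone:
velocities other than `i` followed by all pressures. -/
def restEmb1 {n m : ℕ} (i : Fin n) :
    ({i' : Fin n // i' ≠ i} ⊕ Fin m) → (Fin n ⊕ Fin m) :=
  Sum.map Subtype.val id

/-- The Schur complement `K_RR − K_{R,i} (A_ii)⁻¹ K_{i,R}` of the saddle point
matrix with respect to the 1×1 pivot `A i i` (eliminating velocity `i` alone). -/
noncomputable def schurPivot1 {n m : ℕ} (A : Matrix (Fin n) (Fin n) ℝ)
    (B : Matrix (Fin n) (Fin m) ℝ) (i : Fin n) :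
    Matrix ({i' : Fin n // i' ≠ i} ⊕ Fin m) ({i' : Fin n // i' ≠ i} ⊕ Fin m) ℝ :=
  fun k l =>
    saddleMatrix A B (restEmb1 i k) (restEmb1 i l) -
      saddleMatrix A B (restEmb1 i k) (Sum.inl i) * (A i i)⁻¹ *
        saddleMatrix A B (Sum.inl i) (restEmb1 i l)

/-- If a velocity `i` coupled to a pressure `j` (`B i j ≠ 0`) is
eliminated alone, then `A i i > 0`, the Schur complement has the nonzero entry
`−B i j ² / A i i` on the diagonal position of pressure `j`, so its
pressure–pressure block is nonzero and it is not a saddle point matrix of the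
form `[[A', B'], [B'ᵀ, 0]]` (in particular not an F-matrix). -/
theorem schur_of_single_velocity_pivot_not_Fmatrix
    {n m : ℕ} (A : Matrix (Fin n) (Fin n) ℝ) (B : Matrix (Fin n) (Fin m) ℝ)
    (hA : IsPosDefQuad A) (hB : IsGradientMatrix B)
    (i : Fin n) (j : Fin m) (hij : B i j ≠ 0) :
    0 < A i i ∧
    schurPivot1 A B i (Sum.inr j) (Sum.inr j) = -(B i j) ^ 2 / A i i ∧
    schurPivot1 A B i (Sum.inr j) (Sum.inr j) ≠ 0 ∧
    ¬ (∀ j₁ j₂ : Fin m, schurPivot1 A B i (Sum.inr j₁) (Sum.inr j₂) = 0) ∧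
    ¬ ∃ (A' : Matrix {i' : Fin n // i' ≠ i} {i' : Fin n // i' ≠ i} ℝ)
        (B' : Matrix {i' : Fin n // i' ≠ i} (Fin m) ℝ),
          schurPivot1 A B i = Matrix.fromBlocks A' B' B'ᵀ 0 := by
  have hpos : 0 < A i i := by
    have h := hA (Pi.single i 1) (by simp)
    simpa using h
  have hval : schurPivot1 A B i (Sum.inr j) (Sum.inr j) = -(B i j) ^ 2 / A i i := by
    simp only [schurPivot1, saddleMatrix, restEmb1, Sum.map_inr, id, Matrix.fromBlocks_apply₂₂,
      Matrix.fromBlocks_apply₂₁, Matrix.fromBlocks_apply₁₂, Matrix.transpose_apply,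
      Matrix.zero_apply]
    ring
  have hne : schurPivot1 A B i (Sum.inr j) (Sum.inr j) ≠ 0 := by
    rw [hval]
    exact div_ne_zero (neg_ne_zero.mpr (pow_ne_zero 2 hij)) hpos.ne'
  refine ⟨hpos, hval, hne, fun h => hne (h j j), ?_⟩
  rintro ⟨A', B', h⟩
  apply hne
  rw [h]
  simp
end

section
/- Let A, Ã ∈ ℝ^{n×n} be symmetric positive definite, let B ∈ ℝ^{n×m}, and set K = [[A, B],[Bᵀ, 0]] and K̃ = [[Ã, B],[Bᵀ, 0]]. Suppose λ ∈ ℝ and x = (x₁, x₂) ∈ ℝ^{n+m} satisfy K x = λ K̃ x with λ ≠ 1 and x₁ ≠ 0. Then Bᵀx₁ = 0, and λ satisfies min_{y≠0} (yᵀAy)/(yᵀÃy) ≤ λ ≤ max_{y≠0} (yᵀAy)/(yᵀÃy). In other words, every generalized eigenvalue of the preconditioned saddle point matrix other than 1 is bounded between the extreme generalized eigenvalues of the pencil (A, Ã). -/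
open Matrix

/-- Let `A, Ã` be symmetric positive definite, `K = [[A,B],[Bᵀ,0]]`
and `K̃ = [[Ã,B],[Bᵀ,0]]`. If `K x = λ K̃ x` with `λ ≠ 1` and velocity part
`x₁ ≠ 0`, then `Bᵀ x₁ = 0` and `λ` lies between the extreme generalized Rayleigh
quotients of the pencil `(A, Ã)`. -/
theorem saddle_eigenvalues_bounded_by_pencil
    {n m : ℕ} (A Atil : Matrix (Fin n) (Fin n) ℝ) (B : Matrix (Fin n) (Fin m) ℝ)
    (hA : A.PosDef) (hAtil : Atil.PosDef)
    (lam : ℝ) (x : (Fin n ⊕ Fin m) → ℝ)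
    (heig : (Matrix.fromBlocks A B Bᵀ 0).mulVec x =
              lam • (Matrix.fromBlocks Atil B Bᵀ 0).mulVec x)
    (hlam : lam ≠ 1) (hx1 : (fun i => x (Sum.inl i)) ≠ 0) :
    Bᵀ.mulVec (fun i => x (Sum.inl i)) = 0 ∧
    sInf {r : ℝ | ∃ y : Fin n → ℝ, y ≠ 0 ∧
        r = (y ⬝ᵥ A.mulVec y) / (y ⬝ᵥ Atil.mulVec y)} ≤ lam ∧
    lam ≤ sSup {r : ℝ | ∃ y : Fin n → ℝ, y ≠ 0 ∧
        r = (y ⬝ᵥ A.mulVec y) / (y ⬝ᵥ Atil.mulVec y)} := by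
  have hposA : ∀ y : Fin n → ℝ, y ≠ 0 → 0 < y ⬝ᵥ A.mulVec y := fun y hy => by
    simpa using hA.dotProduct_mulVec_pos hy
  have hposT : ∀ y : Fin n → ℝ, y ≠ 0 → 0 < y ⬝ᵥ Atil.mulVec y := fun y hy => by
    simpa using hAtil.dotProduct_mulVec_pos hy
  set x1 : Fin n → ℝ := fun i => x (Sum.inl i) with hx1def
  set x2 : Fin m → ℝ := fun i => x (Sum.inr i) with hx2def
  have hl : x ∘ Sum.inl = x1 := rfl
  have hr : x ∘ Sum.inr = x2 := rfl
  rw [Matrix.fromBlocks_mulVec, Matrix.fromBlocks_mulVec, hl, hr] at heig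
  have h1 : A.mulVec x1 + B.mulVec x2 = lam • (Atil.mulVec x1 + B.mulVec x2) := by
    funext i
    simpa using congrFun heig (Sum.inl i)
  have h2 : Bᵀ.mulVec x1 = lam • Bᵀ.mulVec x1 := by
    funext i
    simpa using congrFun heig (Sum.inr i)
  have hB : Bᵀ.mulVec x1 = 0 := by
    have h3 : (1 - lam) • Bᵀ.mulVec x1 = 0 := by
      rw [sub_smul, one_smul, ← h2, sub_self]
    exact (smul_eq_zero.mp h3).resolve_left (sub_ne_zero.mpr (Ne.symm hlam))
  have hBx : x1 ⬝ᵥ B.mulVec x2 = 0 := by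
    rw [Matrix.dotProduct_mulVec, ← Matrix.mulVec_transpose, hB, zero_dotProduct]
  have hq : x1 ⬝ᵥ A.mulVec x1 = lam * (x1 ⬝ᵥ Atil.mulVec x1) := by
    have h4 := congrArg (fun v => x1 ⬝ᵥ v) h1
    simpa [dotProduct_add, dotProduct_smul, hBx] using h4
  have hmem : lam ∈ {r : ℝ | ∃ y : Fin n → ℝ, y ≠ 0 ∧
      r = (y ⬝ᵥ A.mulVec y) / (y ⬝ᵥ Atil.mulVec y)} :=
    ⟨x1, hx1, by rw [hq, mul_div_cancel_right₀ _ (hposT x1 hx1).ne']⟩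
  refine ⟨hB, csInf_le ⟨0, ?_⟩ hmem, le_csSup ?_ hmem⟩
  · rintro r ⟨y, hy, rfl⟩
    exact (div_pos (hposA y hy) (hposT y hy)).le
  · have hc : ContinuousOn (fun y : Fin n → ℝ => (y ⬝ᵥ A.mulVec y) / (y ⬝ᵥ Atil.mulVec y))
        (Metric.sphere 0 1) := by
      apply ContinuousOn.div
      · exact (continuous_id.dotProduct (continuous_const.matrix_mulVec continuous_id)).continuousOn
      · exact (continuous_id.dotProduct (continuous_const.matrix_mulVec continuous_id)).continuousOn
      · intro y hy
        exact (hposT y (ne_zero_of_mem_unit_sphere ⟨y, hy⟩)).ne'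
    refine ((isCompact_sphere (0 : Fin n → ℝ) 1).bddAbove_image hc).mono ?_
    rintro r ⟨y, hy, rfl⟩
    have hn : ‖y‖ ≠ 0 := norm_ne_zero_iff.mpr hy
    refine ⟨‖y‖⁻¹ • y, ?_, ?_⟩
    · simp [norm_smul, hn]
    · have ht := (hposT y hy).ne'
      simp only [Matrix.mulVec_smul, dotProduct_smul, smul_dotProduct, smul_eq_mul]
      field_simp
end

section
/- Let A11 ∈ ℝ^{p×p} be symmetric positive definite, let A22 ∈ ℝ^{q×q} be symmetric positive semidefinite, let A12 ∈ ℝ^{p×q}, and let γ ≥ 0. Suppose the strengthened Cauchy–Schwarz inequality |xᵀ A12 y| ≤ γ (xᵀA11x)^{1/2} (yᵀA22y)^{1/2} holds for all x ∈ ℝ^p and y ∈ ℝ^q. Then γ² A22 − A12ᵀ A11^{−1} A12 is positive semidefinite, i.e., A12ᵀ A11^{−1} A12 ⪯ γ² A22 in the Loewner order. -/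
open Matrix

/-- If `A11` is SPD, `A22` is PSD and the strengthened
Cauchy–Schwarz inequality `|xᵀ A12 y| ≤ γ √(xᵀA11x) √(yᵀA22y)` holds, then
`A12ᵀ A11⁻¹ A12 ⪯ γ² A22` in the Loewner order. -/
theorem strengthened_CS_implies_loewner_bound
    {p q : ℕ} (A11 : Matrix (Fin p) (Fin p) ℝ) (A22 : Matrix (Fin q) (Fin q) ℝ)
    (A12 : Matrix (Fin p) (Fin q) ℝ) (γ : ℝ) (hγ : 0 ≤ γ)
    (hA11 : A11.PosDef) (hA22 : A22.PosSemidef)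
    (hCS : ∀ (x : Fin p → ℝ) (y : Fin q → ℝ),
        |x ⬝ᵥ A12.mulVec y| ≤
          γ * Real.sqrt (x ⬝ᵥ A11.mulVec x) * Real.sqrt (y ⬝ᵥ A22.mulVec y)) :
    (γ ^ 2 • A22 - A12ᵀ * A11⁻¹ * A12).PosSemidef := by
  have hH : (A12ᵀ * A11⁻¹ * A12).IsHermitian := by
    have h := (hA11.posSemidef.inv.conjTranspose_mul_mul_same A12).isHermitian
    rwa [conjTranspose_eq_transpose_of_trivial] at h
  refine PosSemidef.of_dotProduct_mulVec_nonneg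
    ((hA22.smul (sq_nonneg γ)).isHermitian.sub hH) fun y => ?_
  set x : Fin p → ℝ := A11⁻¹ *ᵥ (A12 *ᵥ y) with hx
  have hdet : IsUnit A11.det := isUnit_iff_ne_zero.mpr hA11.det_pos.ne'
  have hAx : A11 *ᵥ x = A12 *ᵥ y := by
    rw [hx, mulVec_mulVec, mul_nonsing_inv _ hdet, one_mulVec]
  have hs : 0 ≤ x ⬝ᵥ A11 *ᵥ x := by
    simpa using hA11.posSemidef.dotProduct_mulVec_nonneg x
  have ht : 0 ≤ y ⬝ᵥ A22 *ᵥ y := by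
    simpa using hA22.dotProduct_mulVec_nonneg y
  have hq : y ⬝ᵥ (A12ᵀ * A11⁻¹ * A12) *ᵥ y = x ⬝ᵥ A11 *ᵥ x := by
    rw [hAx, ← mulVec_mulVec, ← mulVec_mulVec, ← hx, dotProduct_mulVec, vecMul_transpose,
      dotProduct_comm]
  have h := hCS x y
  rw [← hAx, abs_of_nonneg hs] at h
  rw [star_trivial, sub_mulVec, dotProduct_sub, smul_mulVec, dotProduct_smul, hq, smul_eq_mul]
  generalize x ⬝ᵥ A11 *ᵥ x = s at *
  generalize y ⬝ᵥ A22 *ᵥ y = t at *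
  have h2 : s ^ 2 ≤ γ ^ 2 * s * t := by
    have := pow_le_pow_left₀ hs h 2
    rwa [mul_pow, mul_pow, Real.sq_sqrt hs, Real.sq_sqrt ht] at this
  rcases hs.eq_or_lt with h0 | h0
  · rw [← h0, sub_zero]; positivity
  · have : s * s ≤ s * (γ ^ 2 * t) := by linarith
    linarith [le_of_mul_le_mul_left this h0]
end

section
/- Let d > 0 and let f : ℝ → ℝ be continuously differentiable on [0, d] with ∫₀^d f(s) ds = 0. Then ∫₀^d f'(s)² ds ≥ (π/d)² ∫₀^d f(s)² ds. -/
open Real intervalIntegral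

theorem pw_aux {d : ℝ} (hd : 0 < d) (f f' : ℝ → ℝ)
    (hderiv : ∀ s ∈ Set.Icc (0 : ℝ) d, HasDerivWithinAt f (f' s) (Set.Icc (0 : ℝ) d) s)
    (hcont : ContinuousOn f' (Set.Icc (0 : ℝ) d))
    (hmean : ∫ s in (0 : ℝ)..d, f s = 0) (k : ℝ) (hk0 : 0 < k) (hk : k < Real.pi / d) :
    k ^ 2 * ∫ s in (0 : ℝ)..d, (f s) ^ 2 ≤ ∫ s in (0 : ℝ)..d, (f' s) ^ 2 := by
  have hu : Set.uIcc (0 : ℝ) d = Set.Icc 0 d := Set.uIcc_of_le hd.le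
  have hf : ContinuousOn f (Set.Icc (0 : ℝ) d) := fun s hs => (hderiv s hs).continuousWithinAt
  have hfi : IntervalIntegrable f MeasureTheory.volume 0 d := by
    apply ContinuousOn.intervalIntegrable; rwa [hu]
  obtain ⟨F, hF⟩ : ∃ F : ℝ → ℝ, F = fun t => ∫ s in (0 : ℝ)..t, f s := ⟨_, rfl⟩
  have hF0 : F 0 = 0 := by simp [hF]
  have hFd : F d = 0 := by simp [hF, hmean]
  have hFc : ContinuousOn F (Set.Icc (0 : ℝ) d) := by
    rw [hF, ← hu]
    apply intervalIntegral.continuousOn_primitive_interval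
    rw [hu]
    exact hf.integrableOn_Icc
  have hFder : ∀ s ∈ Set.Ioo (0 : ℝ) d, HasDerivAt F (f s) s := by
    intro s hs
    rw [hF]
    apply intervalIntegral.integral_hasDerivAt_right
    · apply hfi.mono_set
      rw [hu, Set.uIcc_of_le hs.1.le]
      exact Set.Icc_subset_Icc le_rfl hs.2.le
    · exact (hf.mono Set.Ioo_subset_Icc_self).stronglyMeasurableAtFilter isOpen_Ioo s hs
    · exact hf.continuousAt (Icc_mem_nhds hs.1 hs.2)
  have hfder : ∀ s ∈ Set.Ioo (0 : ℝ) d, HasDerivAt f (f' s) s := fun s hs =>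
    (hderiv s (Set.Ioo_subset_Icc_self hs)).hasDerivAt (Icc_mem_nhds hs.1 hs.2)
  have hkd : k * d < Real.pi := by rwa [lt_div_iff₀ hd] at hk
  have hcos : ∀ s ∈ Set.Icc (0 : ℝ) d, Real.cos (k * (s - d / 2)) ≠ 0 := by
    intro s hs
    apply ne_of_gt
    apply Real.cos_pos_of_mem_Ioo
    have h1 : 0 ≤ k * s := mul_nonneg hk0.le hs.1
    have h2 : k * s ≤ k * d := mul_le_mul_of_nonneg_left hs.2 hk0.le
    constructor <;> nlinarith
  obtain ⟨T, hT⟩ : ∃ T : ℝ → ℝ, T = fun s => Real.tan (k * (s - d / 2)) := ⟨_, rfl⟩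
  have hTder : ∀ s ∈ Set.Icc (0 : ℝ) d, HasDerivAt T (k * (1 + T s ^ 2)) s := by
    intro s hs
    have h1 := Real.hasDerivAt_tan (hcos s hs)
    have h2 : HasDerivAt (fun s : ℝ => k * (s - d / 2)) k s := by
      simpa using ((hasDerivAt_id s).sub_const (d / 2)).const_mul k
    have h3 := h1.comp s h2
    rw [hT]
    refine h3.congr_deriv ?_
    have := hcos s hs
    simp only [Real.tan_eq_sin_div_cos]
    generalize k * (s - d / 2) = x at this
    field_simp
    rw [add_comm, Real.sin_sq_add_cos_sq]
  have hTc : ContinuousOn T (Set.Icc (0 : ℝ) d) := fun s hs =>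
    (hTder s hs).continuousAt.continuousWithinAt
  have hH := intervalIntegral.integral_eq_sub_of_hasDerivAt_of_le hd.le
    (f := fun s => 2 * k ^ 2 * (F s * f s) + k ^ 3 * (F s ^ 2 * T s))
    (f' := fun s => 2 * k ^ 2 * (f s * f s + F s * f' s)
      + k ^ 3 * ((2 * F s * f s) * T s + F s ^ 2 * (k * (1 + T s ^ 2))))
    (by fun_prop)
    (by
      intro s hs
      have a := hFder s hs
      have b := hfder s hs
      have c := hTder s (Set.Ioo_subset_Icc_self hs)
      refine (((a.mul b).const_mul (2 * k ^ 2)).add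
        (((a.pow 2).mul c).const_mul (k ^ 3))).congr_deriv ?_
      simp)
    (by
      apply ContinuousOn.intervalIntegrable
      rw [hu]
      fun_prop)
  simp only [hF0, hFd] at hH
  have i1 : IntervalIntegrable (fun s => f' s ^ 2) MeasureTheory.volume 0 d := by
    apply ContinuousOn.intervalIntegrable; rw [hu]; fun_prop
  have i2 : IntervalIntegrable (fun s => k ^ 2 * f s ^ 2) MeasureTheory.volume 0 d := by
    apply ContinuousOn.intervalIntegrable; rw [hu]; fun_prop
  have i3 : IntervalIntegrable (fun s => 2 * k ^ 2 * (f s * f s + F s * f' s)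
      + k ^ 3 * ((2 * F s * f s) * T s + F s ^ 2 * (k * (1 + T s ^ 2))))
      MeasureTheory.volume 0 d := by
    apply ContinuousOn.intervalIntegrable; rw [hu]; fun_prop
  have key : ∫ s in (0 : ℝ)..d, k ^ 2 * f s ^ 2 ≤ ∫ s in (0 : ℝ)..d, (f' s ^ 2 +
      (2 * k ^ 2 * (f s * f s + F s * f' s)
      + k ^ 3 * ((2 * F s * f s) * T s + F s ^ 2 * (k * (1 + T s ^ 2))))) := by
    apply intervalIntegral.integral_mono_on hd.le i2 (i1.add i3)
    intro s _
    have e1 := sq_nonneg (f' s + k ^ 2 * F s)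
    have e2 := sq_nonneg (k * (f s + k * F s * T s))
    nlinarith
  rw [intervalIntegral.integral_add i1 i3, hH, intervalIntegral.integral_const_mul] at key
  simpa using key

/-- (Poincaré–Wirtinger inequality with optimal constant.)
If `f` is continuously differentiable on `[0, d]` (with derivative `f'` there)
and has zero mean on `[0, d]`, then `∫₀^d f'² ≥ (π/d)² ∫₀^d f²`. -/
theorem poincare_wirtinger {d : ℝ} (hd : 0 < d) (f f' : ℝ → ℝ)
    (hderiv : ∀ s ∈ Set.Icc (0 : ℝ) d, HasDerivWithinAt f (f' s) (Set.Icc (0 : ℝ) d) s)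
    (hcont : ContinuousOn f' (Set.Icc (0 : ℝ) d))
    (hmean : ∫ s in (0 : ℝ)..d, f s = 0) :
    (Real.pi / d) ^ 2 * ∫ s in (0 : ℝ)..d, (f s) ^ 2 ≤ ∫ s in (0 : ℝ)..d, (f' s) ^ 2 := by
  have hpos : 0 < Real.pi / d := div_pos Real.pi_pos hd
  have hc : Continuous (fun k : ℝ => k ^ 2 * ∫ s in (0 : ℝ)..d, (f s) ^ 2) := by fun_prop
  have ht := (hc.tendsto (Real.pi / d)).mono_left
    (nhdsWithin_le_nhds (s := Set.Iio (Real.pi / d)))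
  refine le_of_tendsto ht ?_
  filter_upwards [Ioo_mem_nhdsLT hpos] with k hk
  exact pw_aux hd f f' hderiv hcont hmean k hk.1 hk.2
end
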